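/- Let m = 4, v = (1, 9, 10, 15), q = (1/4, 1/4, 1/4, 1/4), and n = 2. Then no multiplier λ satisfying Property 3 minimizes g_B over all multipliers; equivalently, every multiplier minimizing g_B has some indices k, i with λ k i > 0 together with some j < i such that q j · φ(j,λ) > 0. -/

import Mathlib

open Finset

/-- A multiplier matrix: nonnegative, lower-triangular (`lam k j = 0` whenever `j > k`),
with each row `k` summing to `1` over `j ≤ k`. -/
def IsMultiplier {m : ℕ} (lam : Fin m → Fin m → ℝ) : Prop :=
  (∀ k j, 0 ≤ lam k j) ∧ (∀ k j : Fin m, k < j → lam k j = 0) ∧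
  (∀ k, ∑ j ∈ Finset.Iic k, lam k j = 1)

/-- The virtual value `φ(i, λ) = v i − (1 / q i) · ∑_{k ≥ i} q k (v k − v i) λ k i`. -/
noncomputable def phi {m : ℕ} (v q : Fin m → ℝ) (lam : Fin m → Fin m → ℝ) (i : Fin m) : ℝ :=
  v i - (1 / q i) * ∑ k ∈ Finset.Ici i, q k * (v k - v i) * lam k i

/-- Border-feasible allocation vector for `n` buyers: monotone, `[0,1]`-valued, satisfying
Border's constraints `n · ∑_{ℓ ≥ j} q ℓ · x ℓ ≤ 1 − (∑_{ℓ < j} q ℓ)^n` for all `j`. -/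
def BorderFeasible (n : ℕ) {m : ℕ} (q : Fin m → ℝ) (x : Fin m → ℝ) : Prop :=
  Monotone x ∧ (∀ i, 0 ≤ x i ∧ x i ≤ 1) ∧
  ∀ j : Fin m, (n : ℝ) * ∑ l ∈ Finset.Ici j, q l * x l ≤ 1 - (∑ l ∈ Finset.Iio j, q l) ^ n

/-- `g_B(λ)`: the supremum over Border-feasible allocation vectors `x` of
`∑ i, q i · φ(i, λ) · x i`. -/
noncomputable def gB (n : ℕ) {m : ℕ} (v q : Fin m → ℝ) (lam : Fin m → Fin m → ℝ) : ℝ :=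
  sSup {s : ℝ | ∃ x : Fin m → ℝ, BorderFeasible n q x ∧ s = ∑ i, q i * phi v q lam i * x i}

/-- Explicit form of `phi` at index `1`, bounded below by `2`. -/
lemma phi_one_ge (lam : Fin 4 → Fin 4 → ℝ) (h : IsMultiplier lam) :
    2 ≤ phi (![1, 9, 10, 15]) (![1/4, 1/4, 1/4, 1/4]) lam 1 := by
  obtain ⟨h0, h1, h2⟩ := h
  have e : (Finset.Ici (1 : Fin 4)) = {1, 2, 3} := by decide
  have e2 : (Finset.Iic (2 : Fin 4)) = {0, 1, 2} := by decide
  have e3 : (Finset.Iic (3 : Fin 4)) = {0, 1, 2, 3} := by decide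
  have r2 := h2 2
  have r3 := h2 3
  rw [e2] at r2
  rw [e3] at r3
  unfold phi
  rw [e]
  simp at r2 r3 ⊢
  have := h0 2 0
  have := h0 2 2
  have := h0 3 0
  have := h0 3 2
  have := h0 3 3
  linarith

lemma phi_two_eq (lam : Fin 4 → Fin 4 → ℝ) (h : lam 3 2 = 0) :
    phi (![1, 9, 10, 15]) (![1/4, 1/4, 1/4, 1/4]) lam 2 = 10 := by
  have e : (Finset.Ici (2 : Fin 4)) = {2, 3} := by decide
  unfold phi
  rw [e]
  simp [h]

lemma phi_three_eq (lam : Fin 4 → Fin 4 → ℝ) :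
    phi (![1, 9, 10, 15]) (![1/4, 1/4, 1/4, 1/4]) lam 3 = 15 := by
  have e : (Finset.Ici (3 : Fin 4)) = {3} := by decide
  unfold phi
  rw [e]
  simp

lemma gB_bdd (n : ℕ) {m : ℕ} (v q : Fin m → ℝ) (lam : Fin m → Fin m → ℝ) :
    BddAbove {s : ℝ | ∃ x : Fin m → ℝ, BorderFeasible n q x ∧
      s = ∑ i, q i * phi v q lam i * x i} := by
  refine ⟨∑ i, |q i * phi v q lam i|, ?_⟩
  rintro s ⟨x, hx, rfl⟩
  refine Finset.sum_le_sum fun i _ => ?_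
  obtain ⟨a, b⟩ := hx.2.1 i
  calc _ ≤ |q i * phi v q lam i| * x i := mul_le_mul_of_nonneg_right (le_abs_self _) a
    _ ≤ |q i * phi v q lam i| * 1 := mul_le_mul_of_nonneg_left b (abs_nonneg _)
    _ = _ := mul_one _

lemma feas_x : BorderFeasible 2 (![1/4, 1/4, 1/4, 1/4]) (![0, 3/8, 5/8, 7/8] : Fin 4 → ℝ) := by
  have e0 : (Finset.Ici (0 : Fin 4)) = {0, 1, 2, 3} := by decide
  have e1 : (Finset.Ici (1 : Fin 4)) = {1, 2, 3} := by decide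
  have e2 : (Finset.Ici (2 : Fin 4)) = {2, 3} := by decide
  have e3 : (Finset.Ici (3 : Fin 4)) = {3} := by decide
  have f0 : (Finset.Iio (0 : Fin 4)) = ∅ := by decide
  have f1 : (Finset.Iio (1 : Fin 4)) = {0} := by decide
  have f2 : (Finset.Iio (2 : Fin 4)) = {0, 1} := by decide
  have f3 : (Finset.Iio (3 : Fin 4)) = {0, 1, 2} := by decide
  refine ⟨?_, ?_, ?_⟩
  · intro i j hij
    fin_cases i <;> fin_cases j <;> first | exact absurd hij (by decide) | norm_num
  · intro i
    fin_cases i <;> norm_num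
  · intro j
    fin_cases j
    · simp [e0, f0]; norm_num
    · simp [e1, f1]; norm_num
    · simp [e2, f2]; norm_num
    · simp [e3, f3]; norm_num

/-- The comparison multiplier. -/
noncomputable def lamStar : Fin 4 → Fin 4 → ℝ :=
  ![![1, 0, 0, 0], ![1, 0, 0, 0], ![0, 1, 0, 0], ![0, 3/11, 8/11, 0]]

lemma lamStar_mult : IsMultiplier lamStar := by
  have e0 : (Finset.Iic (0 : Fin 4)) = {0} := by decide
  have e1 : (Finset.Iic (1 : Fin 4)) = {0, 1} := by decide
  have e2 : (Finset.Iic (2 : Fin 4)) = {0, 1, 2} := by decide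
  have e3 : (Finset.Iic (3 : Fin 4)) = {0, 1, 2, 3} := by decide
  refine ⟨?_, ?_, ?_⟩
  · intro k j
    fin_cases k <;> fin_cases j <;> norm_num [lamStar]
  · intro k j
    fin_cases k <;> fin_cases j <;> simp [lamStar]
  · intro k
    fin_cases k
    · simp [e0, lamStar]
    · simp [e1, lamStar]
    · simp [e2, lamStar]
    · simp [e3, lamStar]; norm_num

lemma gB_lamStar :
    gB 2 (![1, 9, 10, 15]) (![1/4, 1/4, 1/4, 1/4]) lamStar ≤ 1715/352 := by
  have e0 : (Finset.Ici (0 : Fin 4)) = {0, 1, 2, 3} := by decide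
  have e1 : (Finset.Ici (1 : Fin 4)) = {1, 2, 3} := by decide
  have e2 : (Finset.Ici (2 : Fin 4)) = {2, 3} := by decide
  have e3 : (Finset.Ici (3 : Fin 4)) = {3} := by decide
  have f1 : (Finset.Iio (1 : Fin 4)) = {0} := by decide
  have f3 : (Finset.Iio (3 : Fin 4)) = {0, 1, 2} := by decide
  have p0 : phi (![1, 9, 10, 15]) (![1/4, 1/4, 1/4, 1/4]) lamStar 0 = -7 := by
    unfold phi
    rw [e0]
    simp [lamStar]
    norm_num
  have p1 : phi (![1, 9, 10, 15]) (![1/4, 1/4, 1/4, 1/4]) lamStar 1 = 70/11 := by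
    unfold phi
    rw [e1]
    simp [lamStar]
    norm_num
  have p2 : phi (![1, 9, 10, 15]) (![1/4, 1/4, 1/4, 1/4]) lamStar 2 = 70/11 := by
    unfold phi
    rw [e2]
    simp [lamStar]
    norm_num
  refine csSup_le ⟨_, _, feas_x, rfl⟩ ?_
  rintro s ⟨x, ⟨_, hx, hb⟩, rfl⟩
  rw [Fin.sum_univ_four, p0, p1, p2, phi_three_eq]
  have b1 := hb 1
  have b3 := hb 3
  rw [e1, f1] at b1
  rw [e3, f3] at b3
  simp at b1 b3 ⊢
  have := (hx 0).1
  norm_num at b1 b3 ⊢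
  linarith

/-- With `m = 4`, `v = (1, 9, 10, 15)`, `q = (1/4, 1/4, 1/4, 1/4)` and `n = 2` buyers,
every multiplier minimizing `g_B` violates Property 3: it has some `λ k i > 0` together
with some `j < i` such that `q j · φ(j, λ) > 0`. -/
theorem optimal_gB_violates_property3 :
    ∀ lam : Fin 4 → Fin 4 → ℝ, IsMultiplier lam →
      (∀ lam' : Fin 4 → Fin 4 → ℝ, IsMultiplier lam' →
        gB 2 (![1, 9, 10, 15]) (![1/4, 1/4, 1/4, 1/4]) lam
          ≤ gB 2 (![1, 9, 10, 15]) (![1/4, 1/4, 1/4, 1/4]) lam') →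
      ∃ k i : Fin 4, 0 < lam k i ∧
        ∃ j : Fin 4, j < i ∧
          0 < (![1/4, 1/4, 1/4, 1/4] : Fin 4 → ℝ) j *
              phi (![1, 9, 10, 15]) (![1/4, 1/4, 1/4, 1/4]) lam j := by
  intro lam hlam hmin
  have h1 := phi_one_ge lam hlam
  refine ⟨3, 2, ?_, 1, by decide, ?_⟩
  · by_contra hc
    have hz : lam 3 2 = 0 := le_antisymm (not_lt.mp hc) (hlam.1 3 2)
    have hle := (hmin lamStar lamStar_mult).trans gB_lamStar
    have hge := le_csSup (gB_bdd 2 (![1, 9, 10, 15]) (![1/4, 1/4, 1/4, 1/4]) lam)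
      ⟨_, feas_x, rfl⟩
    have hh := hge.trans hle
    rw [Fin.sum_univ_four, phi_two_eq lam hz, phi_three_eq] at hh
    simp at hh
    norm_num at hh
    linarith
  · simp
    linarith
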